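/- Let U_1,…,U_r ∈ ℂ[t_1,…,t_m,x_1,…,x_r] be homogeneous polynomials (U_i of total degree d_i ≥ 1), set W_i = U_i(0;·) ∈ ℂ[x_1,…,x_r], and assume that the polynomial ring ℂ[x_1,…,x_r] is integral over the ℂ-subalgebra generated by W_1,…,W_r. Then for every Λ ∈ ℂ^m and every λ ∈ ℂ^r there exists b ∈ ℂ^r such that U_i(Λ; b) = W_i(λ) for all i = 1,…,r. -/

import Mathlib

open MvPolynomial

/-- Specialization `t := ζ` of the first block of variables:
`ℂ[t₁,…,t_m,x₁,…,x_r] → ℂ[x₁,…,x_r]`. -/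
noncomputable def specializeT {m r : ℕ} (ζ : Fin m → ℂ) :
    MvPolynomial (Fin m ⊕ Fin r) ℂ →ₐ[ℂ] MvPolynomial (Fin r) ℂ :=
  aeval (Sum.elim (fun i => C (ζ i)) X)

namespace Stmt11Aux

theorem hc_mul {r : ℕ} {d : ℕ} (n : ℕ) (g w : MvPolynomial (Fin r) ℂ) (hw : w.IsHomogeneous d) :
    homogeneousComponent n (g * w) =
      if d ≤ n then homogeneousComponent (n - d) g * w else 0 := by
  let _ : GradedAlgebra (homogeneousSubmodule (Fin r) ℂ) := MvPolynomial.gradedAlgebra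
  have key : ∀ (f : MvPolynomial (Fin r) ℂ) (i : ℕ),
      (DirectSum.decompose (homogeneousSubmodule (Fin r) ℂ) f i : MvPolynomial (Fin r) ℂ) =
        homogeneousComponent i f := fun f i => decomposition.decompose'_apply f i
  have h := DirectSum.coe_decompose_mul_of_right_mem (homogeneousSubmodule (Fin r) ℂ) n
    (a := g) (b := w) (i := d) hw
  rwa [key, key] at h

theorem hc_mem {r : ℕ} {d : Fin r → ℕ} (W : Fin r → MvPolynomial (Fin r) ℂ)
    (hW : ∀ i, (W i).IsHomogeneous (d i)) (n : ℕ) (p : MvPolynomial (Fin r) ℂ)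
    (hp : p ∈ Ideal.span (Set.range W)) :
    ∃ g : Fin r → MvPolynomial (Fin r) ℂ,
      (∀ i, g i = 0 ∨ (g i).totalDegree + d i ≤ n) ∧
      ∑ i, g i * W i = homogeneousComponent n p := by
  obtain ⟨c, rfl⟩ := Ideal.mem_span_range_iff_exists_fun.1 hp
  refine ⟨fun i => if d i ≤ n then homogeneousComponent (n - d i) (c i) else 0, ?_, ?_⟩
  · intro i
    dsimp only
    split_ifs with h
    · right
      have := (homogeneousComponent_isHomogeneous (n - d i) (c i)).totalDegree_le
      omega
    · left; rfl
  · rw [map_sum]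
    refine Finset.sum_congr rfl fun i _ => ?_
    rw [hc_mul n _ _ (hW i)]
    by_cases h : d i ≤ n
    · simp only [if_pos h]
    · simp only [if_neg h, zero_mul]

theorem pow_mem {r : ℕ} {d : Fin r → ℕ} (W : Fin r → MvPolynomial (Fin r) ℂ)
    (hW : ∀ i, (W i).IsHomogeneous (d i))
    (hint : Algebra.IsIntegral (Algebra.adjoin ℂ (Set.range W)) (MvPolynomial (Fin r) ℂ))
    (j : Fin r) : ∃ n : ℕ, (X j : MvPolynomial (Fin r) ℂ) ^ n ∈ Ideal.span (Set.range W) := by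
  set I := Ideal.span (Set.range W) with hI
  -- every element of the subalgebra is constant modulo `I`
  have key : ∀ a ∈ Algebra.adjoin ℂ (Set.range W), ∃ c : ℂ, a - C c ∈ I := by
    intro a ha
    induction ha using Algebra.adjoin_induction with
    | mem x hx => exact ⟨0, by simpa using Ideal.subset_span hx⟩
    | algebraMap c => exact ⟨c, by simp [MvPolynomial.algebraMap_eq]⟩
    | add x y _ _ hx hy =>
      obtain ⟨c, hc⟩ := hx
      obtain ⟨e, he⟩ := hy
      refine ⟨c + e, ?_⟩
      have := I.add_mem hc he
      rw [C_add]
      convert this using 1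
      ring
    | mul x y _ _ hx hy =>
      obtain ⟨c, hc⟩ := hx
      obtain ⟨e, he⟩ := hy
      refine ⟨c * e, ?_⟩
      have := I.add_mem (I.mul_mem_right y hc) (I.mul_mem_left (C c) he)
      rw [C_mul]
      convert this using 1
      ring
  choose! k hk using key
  obtain ⟨P, hP, hP0⟩ := hint.isIntegral (X j : MvPolynomial (Fin r) ℂ)
  refine ⟨P.natDegree, ?_⟩
  set n := P.natDegree with hn
  have h1 : (X j : MvPolynomial (Fin r) ℂ) ^ n +
      ∑ i ∈ Finset.range n, C (k (P.coeff i)) * X j ^ i ∈ I := by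
    rw [Polynomial.eval₂_eq_sum_range, Finset.sum_range_succ] at hP0
    have h2 : ∑ i ∈ Finset.range n,
        (((P.coeff i : Algebra.adjoin ℂ (Set.range W)) : MvPolynomial (Fin r) ℂ)
          - C (k (P.coeff i))) * X j ^ i ∈ I :=
      I.sum_mem fun i _ => I.mul_mem_right _ (hk _ (P.coeff i).2)
    have h3 := I.neg_mem h2
    convert h3 using 1
    simp only [sub_mul, Finset.sum_sub_distrib]
    have hlc : P.coeff P.natDegree = 1 := hP
    rw [hlc, map_one, one_mul] at hP0
    have h4 : (∑ i ∈ Finset.range n,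
        ((P.coeff i : Algebra.adjoin ℂ (Set.range W)) : MvPolynomial (Fin r) ℂ) * X j ^ i)
        + X j ^ n = 0 := hP0
    linear_combination h4
  obtain ⟨g, -, hg⟩ := hc_mem W hW n _ h1
  have h5 : homogeneousComponent n ((X j : MvPolynomial (Fin r) ℂ) ^ n +
      ∑ i ∈ Finset.range n, C (k (P.coeff i)) * X j ^ i) = X j ^ n := by
    rw [map_add, map_sum, homogeneousComponent_of_mem (m := n) (isHomogeneous_X_pow j n),
      if_pos rfl, Finset.sum_eq_zero, add_zero]
    intro i hi
    rw [homogeneousComponent_C_mul, homogeneousComponent_of_mem (isHomogeneous_X_pow j i),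
      if_neg (by have := Finset.mem_range.1 hi; omega), mul_zero]
  rw [h5] at hg
  rw [← hg]
  exact I.sum_mem fun i _ => I.mul_mem_left _ (Ideal.subset_span ⟨i, rfl⟩)

theorem exists_bound {r : ℕ} (I : Ideal (MvPolynomial (Fin r) ℂ))
    (h : ∀ j, ∃ n : ℕ, (X j : MvPolynomial (Fin r) ℂ) ^ n ∈ I) :
    ∃ N : ℕ, 1 ≤ N ∧ ∀ n, N ≤ n → ∀ p : MvPolynomial (Fin r) ℂ, p.IsHomogeneous n → p ∈ I := by
  choose e he using h
  refine ⟨∑ j, e j + 1, by omega, fun n hn p hp => ?_⟩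
  rw [p.as_sum]
  refine I.sum_mem fun s hs => ?_
  have hdeg : ∑ j, s j = n := by
    have := hp (mem_support_iff.1 hs)
    rw [Finsupp.weight_apply, Finsupp.sum_fintype _ _ (by simp)] at this
    simpa using this
  obtain ⟨j, hj⟩ : ∃ j, e j ≤ s j := by
    by_contra! hcon
    have := Finset.sum_le_sum (fun j (_ : j ∈ Finset.univ) => (hcon j).le)
    omega
  have h1 : monomial s (coeff s p) =
      monomial (s - Finsupp.single j (e j)) (coeff s p) * X j ^ e j := by
    rw [X_pow_eq_monomial, monomial_mul, mul_one, tsub_add_cancel_of_le]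
    simpa using hj
  rw [h1]
  exact I.mul_mem_left _ (he j)

theorem sub_hc_lt {r : ℕ} (n : ℕ) (hn : 1 ≤ n) (p : MvPolynomial (Fin r) ℂ)
    (hp : p.totalDegree < n + 1) : (p - homogeneousComponent n p).totalDegree < n := by
  rw [totalDegree, Finset.sup_lt_iff (by simpa using Nat.lt_of_lt_of_le Nat.zero_lt_one hn)]
  intro s hs
  rw [mem_support_iff, coeff_sub, coeff_homogeneousComponent] at hs
  have e : (s.sum fun _ e => e) = s.degree := rfl
  rw [e]
  split_ifs at hs with h
  · simp at hs
  · rw [sub_zero] at hs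
    have := le_totalDegree (mem_support_iff.2 hs)
    rw [e] at this
    omega

theorem finite_of {r : ℕ} {d : Fin r → ℕ} (W V : Fin r → MvPolynomial (Fin r) ℂ)
    (hd : ∀ i, 1 ≤ d i)
    (hW : ∀ i, (W i).IsHomogeneous (d i))
    (hV : ∀ i, (V i - W i).totalDegree < d i)
    (hint : Algebra.IsIntegral (Algebra.adjoin ℂ (Set.range W)) (MvPolynomial (Fin r) ℂ)) :
    Module.Finite (Algebra.adjoin ℂ (Set.range V)) (MvPolynomial (Fin r) ℂ) := by
  obtain ⟨N, hN1, hN⟩ := exists_bound _ (pow_mem W hW hint)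
  set T : Set (MvPolynomial (Fin r) ℂ) :=
    (fun s => monomial s (1 : ℂ)) '' {s : Fin r →₀ ℕ | s.degree < N} with hT
  have hTf : T.Finite := (Finsupp.finite_of_degree_lt N).image _
  set M := Submodule.span (Algebra.adjoin ℂ (Set.range V)) T with hM
  have hV' : ∀ i g, g ∈ M → g * V i ∈ M := by
    intro i g hg
    have := M.smul_mem ⟨V i, Algebra.subset_adjoin ⟨i, rfl⟩⟩ hg
    rw [mul_comm]
    exact this
  have key : ∀ n, ∀ p : MvPolynomial (Fin r) ℂ, p.totalDegree < n → p ∈ M := by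
    intro n
    induction n with
    | zero => intro p hp; omega
    | succ n ih =>
      intro p hp
      by_cases hn : n < N
      · rw [p.as_sum]
        refine M.sum_mem fun s hs => ?_
        have h1 : monomial s (1 : ℂ) ∈ M := by
          refine Submodule.subset_span ⟨s, ?_, rfl⟩
          have : s.degree ≤ _ := le_totalDegree hs
          show s.degree < N
          omega
        have h2 := M.smul_mem (algebraMap ℂ (Algebra.adjoin ℂ (Set.range V)) (coeff s p)) h1
        rw [algebraMap_smul, smul_monomial, smul_eq_mul, mul_one] at h2
        exact h2
      · push Not at hn
        obtain ⟨g, hg, hgs⟩ := hc_mem W hW n _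
          (hN n hn _ (homogeneousComponent_isHomogeneous n p))
        rw [homogeneousComponent_of_mem (m := n) (homogeneousComponent_mem n p),
          if_pos rfl] at hgs
        have h1 : p = (p - homogeneousComponent n p) - ∑ i, g i * (V i - W i)
            + ∑ i, g i * V i := by
          rw [← hgs]
          simp only [mul_sub, Finset.sum_sub_distrib]
          ring
        rw [h1]
        refine M.add_mem (M.sub_mem (ih _ (sub_hc_lt n (by omega) p hp))
          (M.sum_mem fun i _ => ih _ ?_)) (M.sum_mem fun i _ => hV' i _ ?_)
        · rcases hg i with h | h
          · rw [h, zero_mul, totalDegree_zero]; omega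
          · have := totalDegree_mul (g i) (V i - W i)
            have := hV i
            omega
        · rcases hg i with h | h
          · rw [h]; exact M.zero_mem
          · refine ih _ ?_
            have := hd i
            omega
  refine ⟨⟨hTf.toFinset, ?_⟩⟩
  rw [hTf.coe_toFinset, eq_top_iff]
  exact fun p _ => key _ p (Nat.lt_succ_self _)

theorem surj {r : ℕ} (V : Fin r → MvPolynomial (Fin r) ℂ)
    (hf : Module.Finite (Algebra.adjoin ℂ (Set.range V)) (MvPolynomial (Fin r) ℂ))
    (c : Fin r → ℂ) : ∃ b : Fin r → ℂ, ∀ i, eval b (V i) = c i := by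
  have hint : Algebra.IsIntegral (Algebra.adjoin ℂ (Set.range V)) (MvPolynomial (Fin r) ℂ) :=
    inferInstance
  have htb : IsTranscendenceBasis ℂ V := by
    refine Algebra.IsAlgebraic.isTranscendenceBasis_of_le_trdeg_of_finite ℂ V ?_
    rw [MvPolynomial.trdeg_of_isDomain]
    simp
  have hind := htb.1
  let ψ : Algebra.adjoin ℂ (Set.range V) →ₐ[ℂ] ℂ :=
    (aeval c).comp hind.aevalEquiv.symm.toAlgHom
  have hψ : Function.Surjective ψ := fun z => ⟨algebraMap _ _ z, by rw [AlgHom.commutes]; rfl⟩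
  have hmax : (RingHom.ker ψ).IsMaximal := RingHom.ker_isMaximal_of_surjective ψ hψ
  obtain ⟨Q, hQ, hQc⟩ := Ideal.exists_ideal_over_maximal_of_isIntegral
    (S := MvPolynomial (Fin r) ℂ) (RingHom.ker ψ) (by
      rw [(RingHom.injective_iff_ker_eq_bot _).1]
      · exact bot_le
      · exact Subtype.val_injective)
  obtain ⟨b, hb⟩ := eq_vanishingIdeal_singleton_of_isMaximal ℂ hQ
  refine ⟨b, fun i => ?_⟩
  let v : Algebra.adjoin ℂ (Set.range V) := ⟨V i, Algebra.subset_adjoin ⟨i, rfl⟩⟩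
  have hv : ψ v = c i := by
    have : hind.aevalEquiv (X i) = v := by
      apply Subtype.ext
      simp [v]
    show aeval c (hind.aevalEquiv.symm v) = c i
    rw [← this, AlgEquiv.symm_apply_apply, aeval_X]
  have h1 : v - algebraMap ℂ _ (c i) ∈ RingHom.ker ψ := by
    rw [RingHom.mem_ker, map_sub, hv, AlgHom.commutes]
    simp
  rw [← hQc, Ideal.mem_comap, hb, mem_vanishingIdeal_iff] at h1
  have h2 := h1 b rfl
  have h3 : aeval b (V i - C (c i)) = 0 := h2
  rw [map_sub, aeval_C, sub_eq_zero] at h3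
  simpa [aeval_eq_eval] using h3

theorem spec_sub {m r : ℕ} (u : MvPolynomial (Fin m ⊕ Fin r) ℂ) (d : ℕ) (hd : 1 ≤ d)
    (hu : u.IsHomogeneous d) (Λ : Fin m → ℂ) :
    (specializeT Λ u - specializeT (0 : Fin m → ℂ) u).totalDegree < d := by
  suffices h : (specializeT Λ u - specializeT (0 : Fin m → ℂ) u).totalDegree ≤ d - 1 by omega
  rw [u.as_sum, map_sum, map_sum, ← Finset.sum_sub_distrib]
  refine totalDegree_finsetSum_le fun s hs => ?_
  have hdeg : ∑ i, s (Sum.inl i) + ∑ j, s (Sum.inr j) = d := by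
    have := hu (mem_support_iff.1 hs)
    rw [Finsupp.weight_apply, Finsupp.sum_fintype _ _ (by simp)] at this
    simpa using this
  have hform : ∀ ζ : Fin m → ℂ, specializeT ζ (monomial s (coeff s u)) =
      C (coeff s u * ∏ i, ζ i ^ s (Sum.inl i)) * ∏ j, (X j : MvPolynomial (Fin r) ℂ) ^ s (Sum.inr j) := by
    intro ζ
    rw [specializeT, aeval_monomial, Finsupp.prod_fintype _ _ (by simp), Fintype.prod_sum_type]
    simp [MvPolynomial.algebraMap_eq, map_prod, mul_assoc]
  rw [hform, hform, ← sub_mul, ← C_sub, ← mul_sub]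
  by_cases h0 : ∀ i, s (Sum.inl i) = 0
  · simp [h0]
  · push Not at h0
    obtain ⟨i, hi⟩ := h0
    have h1 := Finset.single_le_sum (f := fun i => s (Sum.inl i)) (fun _ _ => Nat.zero_le _)
      (Finset.mem_univ i)
    refine (totalDegree_mul _ _).trans ?_
    rw [totalDegree_C, zero_add]
    refine (totalDegree_finsetProd _ _).trans ?_
    simp only [totalDegree_X_pow]
    omega

end Stmt11Aux

/-- If the `U i` are homogeneous of degree `d i ≥ 1` and `ℂ[x₁,…,x_r]` is
integral over the subalgebra generated by the restrictions `W i = U i (0;·)`,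
then for every `Λ ∈ ℂ^m` and `λ ∈ ℂ^r` there is `b ∈ ℂ^r` with
`U i (Λ; b) = W i (λ)` for all `i`. -/
theorem stmt11 {m r : ℕ} (U : Fin r → MvPolynomial (Fin m ⊕ Fin r) ℂ)
    (d : Fin r → ℕ) (hd : ∀ i, 1 ≤ d i) (hU : ∀ i, (U i).IsHomogeneous (d i))
    (hint : Algebra.IsIntegral
      (Algebra.adjoin ℂ (Set.range fun i => specializeT (0 : Fin m → ℂ) (U i)))
      (MvPolynomial (Fin r) ℂ))
    (Λ : Fin m → ℂ) (lam : Fin r → ℂ) :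
    ∃ b : Fin r → ℂ, ∀ i,
      eval b (specializeT Λ (U i)) = eval lam (specializeT (0 : Fin m → ℂ) (U i)) := by
  have hW : ∀ i, (specializeT (0 : Fin m → ℂ) (U i)).IsHomogeneous (d i) := by
    intro i
    have := (hU i).aeval (n := 1)
      (Sum.elim (fun j : Fin m => C ((0 : Fin m → ℂ) j)) (X : Fin r → MvPolynomial (Fin r) ℂ)) (by
        rintro (j | j)
        · simpa using isHomogeneous_zero (Fin r) ℂ 1
        · exact isHomogeneous_X ℂ j)
    rw [one_mul] at this
    exact this
  exact Stmt11Aux.surj (fun i => specializeT Λ (U i))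
    (Stmt11Aux.finite_of (fun i => specializeT (0 : Fin m → ℂ) (U i)) _ hd hW
      (fun i => Stmt11Aux.spec_sub (U i) (d i) (hd i) (hU i) Λ) hint)
    (fun i => eval lam (specializeT (0 : Fin m → ℂ) (U i)))
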